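/- arXiv:2304.12835 — 2 statements merged into one kernel-verified Lean document; each statement's English description precedes it below -/
import Mathlib

section
/- Let Γ ⊂ ℝⁿ be an open symmetric convex cone as below. Then ϱ_Γ ≤ κ_Γ + 1, with equality if and only if Γ = 𝒫ₖ for some 1 ≤ k ≤ n (in which case k = κ_Γ + 1). -/
/-!
Write `k = κ + 1`. The vector `w` with `k` zeros and `n - k` ones is not in `Γ`: for `k < n` by
maximality of `κ`, and for `k = n` because `0 ∉ Γ`.

*Inequality.* If some `x ∈ Γ` had a `k`-sum `∑_{i ∈ s} xᵢ ≤ 0`, averaging `x` over the permutations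
of `s` would give a point of `Γ` that is constant and nonpositive on `s`. A small multiple of
it plus a nonnegative vector is a rearrangement of `w`, so `w ∈ Γ`, a contradiction. Hence
`Γ ⊆ 𝒫ₖ` (`subset_Pcone`), and evaluating a `k`-sum that meets the last coordinate on
`(1,…,1,1-ϱ) ∈ closure Γ` gives `k - ϱ ≥ 0`.

*Equality.* If `ϱ = k`, a point `x ∉ Γ` is separated from `Γ` by a functional `x ↦ ∑ aᵢ xᵢ`
with `aᵢ ≥ 0` (as `Γ` contains the positive orthant) and `k aⱼ ≤ ∑ aᵢ` (as `Γ` is symmetric and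
`(1,…,1,1-k) ∈ closure Γ`). Such an `a` is a nonnegative combination of indicators of `k`-sets;
concretely, `k ∑ aᵢ xᵢ` is at least `∑ aᵢ` times the smallest `k`-sum of `x` (`weighted_sum_pos`).
It is therefore positive on `𝒫ₖ`, so `𝒫ₖ ⊆ Γ` (`Pcone_subset`). The converse is a computation in
`𝒫ₖ`.
-/

open Finset

noncomputable section

/-- Γ is an open symmetric convex cone in ℝⁿ with vertex at the origin, nonempty boundary,
containing the positive orthant. -/
def IsAdmissibleCone {n : ℕ} (Γ : Set (Fin n → ℝ)) : Prop :=
  IsOpen Γ ∧ Convex ℝ Γ ∧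
    (∀ x ∈ Γ, ∀ t : ℝ, 0 < t → t • x ∈ Γ) ∧
    (∀ x ∈ Γ, ∀ σ : Equiv.Perm (Fin n), x ∘ σ ∈ Γ) ∧
    {x : Fin n → ℝ | ∀ i, 0 < x i} ⊆ Γ ∧
    (frontier Γ).Nonempty

/-- The vector `(0,…,0,1,…,1)` with `k` zeros followed by `n-k` ones. -/
def zeroOneVec (n k : ℕ) : Fin n → ℝ := fun i => if (i : ℕ) < k then 0 else 1

/-- The vector `(0,…,0,1)`. -/
def eLast (n : ℕ) : Fin n → ℝ := fun i => if (i : ℕ) = n - 1 then 1 else 0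

/-- The vector `(1,…,1,1-ϱ)`. -/
def rhoVec (n : ℕ) (ϱ : ℝ) : Fin n → ℝ := fun i => if (i : ℕ) = n - 1 then 1 - ϱ else 1

/-- The linear map `T_ϱ` sending `μ` to `λ` with `λᵢ = ϱ⁻¹ (∑ⱼ μⱼ - (n-ϱ) μᵢ)`. -/
def Tmap (n : ℕ) (ϱ : ℝ) (μ : Fin n → ℝ) : Fin n → ℝ :=
  fun i => ϱ⁻¹ * ((∑ j, μ j) - ((n : ℝ) - ϱ) * μ i)

/-- The inverse map of `T_ϱ`, sending `λ` to `μ` with `μᵢ = (n-ϱ)⁻¹ (∑ⱼ λⱼ - ϱ λᵢ)`. -/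
def TmapInv (n : ℕ) (ϱ : ℝ) (lam : Fin n → ℝ) : Fin n → ℝ :=
  fun i => ((n : ℝ) - ϱ)⁻¹ * ((∑ j, lam j) - ϱ * lam i)

/-- `f` is symmetric (invariant under permutations of coordinates) on `Γ`. -/
def IsSymmetricOn {n : ℕ} (f : (Fin n → ℝ) → ℝ) (Γ : Set (Fin n → ℝ)) : Prop :=
  ∀ x ∈ Γ, ∀ σ : Equiv.Perm (Fin n), f (x ∘ σ) = f x

/-- Condition (★): for all `λ, μ ∈ Γ`, `lim_{t→∞} f(tλ) > f(μ)`. -/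
def CondStar {n : ℕ} (f : (Fin n → ℝ) → ℝ) (Γ : Set (Fin n → ℝ)) : Prop :=
  ∀ lam ∈ Γ, ∀ mu ∈ Γ, ∃ T : ℝ, 0 < T ∧ ∀ t : ℝ, T ≤ t → f mu < f (t • lam)

/-- The partial derivative `fᵢ(λ) = ∂f/∂λᵢ (λ)`. -/
def partialDeriv {n : ℕ} (f : (Fin n → ℝ) → ℝ) (lam : Fin n → ℝ) (i : Fin n) : ℝ :=
  fderiv ℝ f lam (Pi.single i 1)

/-- The cone `𝒫ₖ = {λ ∈ ℝⁿ : the sum of any k distinct entries of λ is positive}`. -/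
def Pcone (n k : ℕ) : Set (Fin n → ℝ) :=
  {lam | ∀ s : Finset (Fin n), s.card = k → 0 < ∑ i ∈ s, lam i}

/-! ### Closure properties of the cone -/

theorem cone_add {n : ℕ} {Γ : Set (Fin n → ℝ)} (hΓ : IsAdmissibleCone Γ)
    {x y : Fin n → ℝ} (hx : x ∈ Γ) (hy : y ∈ Γ) : x + y ∈ Γ := by
  obtain ⟨-, hconv, hcone, -⟩ := hΓ
  have h := hcone _ (hconv hx hy (a := 1/2) (b := 1/2) (by norm_num) (by norm_num)
    (by norm_num)) 2 (by norm_num)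
  convert h using 1
  ext i
  simp
  ring

theorem cone_sum {n : ℕ} {Γ : Set (Fin n → ℝ)} (hΓ : IsAdmissibleCone Γ)
    {ι : Type*} (s : Finset ι) (hs : s.Nonempty) (f : ι → Fin n → ℝ) (hf : ∀ i ∈ s, f i ∈ Γ) :
    ∑ i ∈ s, f i ∈ Γ :=
  Finset.sum_induction_nonempty f (· ∈ Γ) (fun _ _ => cone_add hΓ) hs hf

/-- The openness of `Γ` allows the added vector to have vanishing coordinates. -/
theorem cone_add_nonneg {n : ℕ} {Γ : Set (Fin n → ℝ)} (hΓ : IsAdmissibleCone Γ)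
    {x y : Fin n → ℝ} (hx : x ∈ Γ) (hy : ∀ i, 0 ≤ y i) : x + y ∈ Γ := by
  have hc : ContinuousAt (fun t : ℝ => fun i => x i - t) 0 := by fun_prop
  have h1 : ∀ᶠ t in nhds (0 : ℝ), (fun i => x i - t) ∈ Γ :=
    hc (hΓ.1.mem_nhds (by simpa using hx))
  obtain ⟨t, h2, ht⟩ :=
    ((h1.filter_mono nhdsWithin_le_nhds).and (self_mem_nhdsWithin (s := Set.Ioi (0 : ℝ)))).exists
  have ht' : (0 : ℝ) < t := ht
  have h3 : (fun i => y i + t) ∈ Γ := hΓ.2.2.2.2.1 (fun i => by have := hy i; linarith)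
  convert cone_add hΓ h2 h3 using 1
  ext i
  simp

theorem zero_notMem {n : ℕ} {Γ : Set (Fin n → ℝ)} (hΓ : IsAdmissibleCone Γ) :
    (0 : Fin n → ℝ) ∉ Γ := by
  intro h0
  obtain ⟨hopen, -, hcone, -, -, v, hv⟩ := hΓ
  rw [hopen.frontier_eq] at hv
  apply hv.2
  have hc : ContinuousAt (fun t : ℝ => t • v) 0 := by fun_prop
  have h1 : ∀ᶠ t in nhds (0 : ℝ), t • v ∈ Γ := hc (hopen.mem_nhds (by simpa using h0))
  obtain ⟨t, h2, ht⟩ :=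
    ((h1.filter_mono nhdsWithin_le_nhds).and (self_mem_nhdsWithin (s := Set.Ioi (0 : ℝ)))).exists
  have ht' : (0 : ℝ) < t := ht
  have := hcone _ h2 t⁻¹ (by positivity)
  rwa [smul_smul, inv_mul_cancel₀ ht'.ne', one_smul] at this

/-! ### Averaging and the inclusion `Γ ⊆ 𝒫ₖ` -/

/-- Summing `x` over all permutations of the coordinates in `s` yields a point of `Γ` that is
constant on `s`, where its value is nonpositive because `∑ i ∈ s, x i` is. -/
theorem exists_averaged {n : ℕ} {Γ : Set (Fin n → ℝ)} (hΓ : IsAdmissibleCone Γ)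
    {x : Fin n → ℝ} (hx : x ∈ Γ) (s : Finset (Fin n)) (hs : ∑ i ∈ s, x i ≤ 0) :
    ∃ y ∈ Γ, ∀ i ∈ s, y i ≤ 0 := by
  classical
  let f : Equiv.Perm s → Fin n → ℝ := fun σ => x ∘ (Equiv.Perm.ofSubtype σ : Equiv.Perm (Fin n))
  refine ⟨∑ σ, f σ, cone_sum hΓ _ Finset.univ_nonempty f
    (fun σ _ => hΓ.2.2.2.1 x hx _), fun i hi => ?_⟩
  have hval : ∀ i : s, (∑ σ, f σ) (i : Fin n) = ∑ σ : Equiv.Perm s, x (σ i) := by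
    intro i
    simp [f, Finset.sum_apply]
  have hconst : ∀ j : s, ∑ σ : Equiv.Perm s, x (σ j) = ∑ σ : Equiv.Perm s, x (σ ⟨i, hi⟩) := by
    intro j
    rw [← Equiv.sum_comp (Equiv.mulRight (Equiv.swap ⟨i, hi⟩ j))]
    simp
  have htot : ∑ j : s, ∑ σ : Equiv.Perm s, x (σ j)
      = ∑ σ : Equiv.Perm s, ∑ j ∈ s, x j := by
    rw [Finset.sum_comm]
    refine Finset.sum_congr rfl fun σ _ => ?_
    rw [Equiv.sum_comp σ (fun j : s => x j), Finset.sum_coe_sort s x]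
  rw [Finset.sum_congr rfl (fun j _ => hconst j)] at htot
  simp only [Finset.sum_const, nsmul_eq_mul] at htot
  have hcard : (0 : ℝ) < ((Finset.univ : Finset s).card : ℝ) := by
    have : Nonempty s := ⟨⟨i, hi⟩⟩
    exact_mod_cast Finset.card_pos.mpr Finset.univ_nonempty
  have := hval ⟨i, hi⟩
  rw [this]
  by_contra! hpos
  have h1 := mul_pos hcard hpos
  have h2 := mul_nonpos_of_nonneg_of_nonpos
    (Nat.cast_nonneg (α := ℝ) (Finset.univ : Finset (Equiv.Perm s)).card) hs
  linarith

/-- A point of `Γ` with a nonpositive `k`-sum would, after averaging and rearranging, put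
`zeroOneVec n k` in `Γ`. -/
theorem subset_Pcone {n : ℕ} {Γ : Set (Fin n → ℝ)} (hΓ : IsAdmissibleCone Γ) {k : ℕ}
    (hk : k ≤ n) (hw : zeroOneVec n k ∉ Γ) : Γ ⊆ Pcone n k := by
  classical
  intro x hx s hs
  by_contra! hneg
  apply hw
  obtain ⟨y, hy, hys⟩ := exists_averaged hΓ hx s hneg
  have hcard : Fintype.card {i : Fin n // (i : ℕ) < k} = Fintype.card {i : Fin n // i ∈ s} := by
    rw [Fintype.card_coe, hs, Fintype.card_subtype, Fin.card_filter_val_lt]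
    omega
  let e := Fintype.equivOfCardEq hcard
  have hyσ := hΓ.2.2.2.1 y hy e.extendSubtype
  set z := y ∘ e.extendSubtype with hz
  have hz0 : ∀ i : Fin n, (i : ℕ) < k → z i ≤ 0 := fun i hi => hys _ (e.extendSubtype_mem i hi)
  -- a positive `t` with `t * z i ≤ 1` for all `i`
  have hS : ∀ i, |z i| ≤ ∑ j, |z j| := fun i =>
    Finset.single_le_sum (f := fun j => |z j|) (fun j _ => abs_nonneg _) (Finset.mem_univ i)
  have hS0 : 0 ≤ ∑ j, |z j| := Finset.sum_nonneg fun j _ => abs_nonneg _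
  set t : ℝ := (1 + ∑ j, |z j|)⁻¹ with ht
  have htpos : 0 < t := by positivity
  have htz : ∀ i, t * z i ≤ 1 := by
    intro i
    rw [ht, inv_mul_le_iff₀ (by positivity)]
    have := hS i
    have := le_abs_self (z i)
    linarith
  have := cone_add_nonneg hΓ (hΓ.2.2.1 z hyσ t htpos) (y := zeroOneVec n k - t • z) (by
    intro i
    simp only [zeroOneVec, Pi.sub_apply, Pi.smul_apply, smul_eq_mul]
    split_ifs with h
    · have := mul_nonpos_of_nonneg_of_nonpos htpos.le (hz0 i h)
      linarith
    · have := htz i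
      linarith)
  simpa using this

/-! ### Duality and the inclusion `𝒫ₖ ⊆ Γ` -/

/-- If `a ≥ 0` has total mass `A > 0` and `k aⱼ ≤ A` for every `j`, then `(k / A) a` lies in the
hypersimplex, the convex hull of the indicators of `k`-sets, so `a` is positive on `𝒫ₖ`. -/
theorem weighted_sum_pos {n k : ℕ} (hk1 : 1 ≤ k) (hkn : k ≤ n) {x a : Fin n → ℝ}
    (hx : x ∈ Pcone n k) (ha : ∀ i, 0 ≤ a i) (hA : 0 < ∑ i, a i)
    (hka : ∀ j, (k : ℝ) * a j ≤ ∑ i, a i) : 0 < ∑ i, a i * x i := by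
  classical
  obtain ⟨s, hs, hmin⟩ := Finset.exists_min_image (Finset.powersetCard k Finset.univ)
    (fun s : Finset (Fin n) => ∑ i ∈ s, x i)
    (Finset.powersetCard_nonempty.mpr (by simpa using hkn))
  have hsc : s.card = k := (Finset.mem_powersetCard.mp hs).2
  -- minimality of the `k`-sum over `s`, tested on the exchange of `i ∈ s` with `j ∉ s`
  have hij : ∀ i ∈ s, ∀ j, j ∉ s → x i ≤ x j := by
    intro i hi j hj
    have hj' : j ∉ s.erase i := fun h => hj (Finset.mem_of_mem_erase h)
    have h := hmin (insert j (s.erase i)) (by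
      rw [Finset.mem_powersetCard]
      refine ⟨Finset.subset_univ _, ?_⟩
      rw [Finset.card_insert_of_notMem hj', Finset.card_erase_of_mem hi]
      omega)
    simp only [Finset.sum_insert hj'] at h
    have := Finset.add_sum_erase s x hi
    linarith
  have hsne : s.Nonempty := Finset.card_pos.mp (by omega)
  obtain ⟨m, hm, hmax⟩ := Finset.exists_max_image s x hsne
  set A := ∑ i, a i
  have hpos : 0 < ∑ i ∈ s, x i := hx s hsc
  -- compare both sides with the threshold `x m` separating `s` from its complement
  have hterm : ∀ i, (k * a i - if i ∈ s then A else 0) * x m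
      ≤ (k * a i - if i ∈ s then A else 0) * x i := by
    intro i
    split_ifs with h
    · exact mul_le_mul_of_nonpos_left (hmax i h) (by have := hka i; linarith)
    · exact mul_le_mul_of_nonneg_left (hij m hm i h)
        (by have := mul_nonneg (Nat.cast_nonneg (α := ℝ) k) (ha i); linarith)
  have hsum := Finset.sum_le_sum fun i (_ : i ∈ Finset.univ) => hterm i
  rw [← Finset.sum_mul, Finset.sum_sub_distrib, ← Finset.mul_sum] at hsum
  simp only [sub_mul, ite_mul, zero_mul, Finset.sum_sub_distrib, Finset.sum_ite_mem,
    Finset.univ_inter, Finset.sum_const, hsc, nsmul_eq_mul, mul_assoc, ← Finset.mul_sum] at hsum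
  have h1 := mul_pos hA hpos
  have hk0 : (0 : ℝ) < k := by exact_mod_cast hk1
  have h2 : 0 < (k : ℝ) * ∑ i, a i * x i := by linarith
  exact pos_of_mul_pos_right h2 hk0.le

theorem rhoVec_eq {n : ℕ} (hn : 1 ≤ n) (ϱ : ℝ) :
    rhoVec n ϱ = fun i => 1 - if i = (⟨n - 1, by omega⟩ : Fin n) then ϱ else 0 := by
  ext i
  simp only [rhoVec, Fin.ext_iff]
  split_ifs <;> simp

theorem sum_rhoVec {n : ℕ} (hn : 1 ≤ n) (ϱ : ℝ) (s : Finset (Fin n)) :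
    ∑ i ∈ s, rhoVec n ϱ i = s.card - if (⟨n - 1, by omega⟩ : Fin n) ∈ s then ϱ else 0 := by
  rw [rhoVec_eq hn]
  simp [Finset.sum_sub_distrib]

/-- The functionals nonnegative on `Γ` have coefficients `a` as in `weighted_sum_pos`, so none of
them separates a point of `𝒫ₖ` from `Γ`. -/
theorem Pcone_subset {n : ℕ} (hn : 1 ≤ n) {Γ : Set (Fin n → ℝ)} (hΓ : IsAdmissibleCone Γ)
    {k : ℕ} (hk1 : 1 ≤ k) (hkn : k ≤ n) (hρ : rhoVec n k ∈ closure Γ) : Pcone n k ⊆ Γ := by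
  classical
  intro x hx
  by_contra hxΓ
  have hone : (fun _ => 1 : Fin n → ℝ) ∈ Γ := hΓ.2.2.2.2.1 (fun i => one_pos)
  obtain ⟨f, hf⟩ := geometric_hahn_banach_open_point hΓ.2.1 hΓ.1 hxΓ
  -- `f` is bounded above on the cone `Γ`, hence nonpositive there
  have hfneg : ∀ y ∈ Γ, f y ≤ 0 := by
    intro y hy
    by_contra! hpos
    have h := hf _ (hΓ.2.2.1 y hy ((|f x| + 1) / f y) (by positivity))
    rw [map_smul, smul_eq_mul, div_mul_cancel₀ _ hpos.ne'] at h
    have := le_abs_self (f x)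
    linarith
  have hfx : 0 ≤ f x := by
    by_contra! hneg
    have h1 := hf _ hone
    have h2 := hf _ (hΓ.2.2.1 _ hone (f x / (2 * f (fun _ => 1)))
      (div_pos_of_neg_of_neg hneg (by linarith)))
    rw [map_smul, smul_eq_mul] at h2
    have h3 : f x / (2 * f (fun _ => 1)) * f (fun _ => 1) = f x / 2 := by
      have : f (fun _ => 1) ≠ 0 := by linarith
      field_simp
    linarith
  have hfcl : ∀ y ∈ closure Γ, f y ≤ 0 := fun y hy =>
    closure_minimal (t := {y | f y ≤ 0}) hfneg (isClosed_le f.continuous continuous_const) hy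
  let a : Fin n → ℝ := fun i => - f (Pi.single i 1)
  have hfa : ∀ y, f y = - ∑ i, a i * y i := by
    intro y
    conv_lhs => rw [pi_eq_sum_univ' y]
    simp [a, map_sum, mul_comm]
  have ha : ∀ i, 0 ≤ a i := by
    intro i
    by_contra! hneg
    -- `e_i` is a limit of positive vectors; one close enough to it contradicts `f ≤ 0`
    have hpos : 0 < f (Pi.single i 1) := by simpa [a] using hneg
    have hlim : Filter.Tendsto (fun t : ℝ => f (Pi.single i 1 + t • (fun _ => 1)))
        (nhdsWithin 0 (Set.Ioi 0)) (nhds (f (Pi.single i 1))) := by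
      have : ContinuousAt (fun t : ℝ => f (Pi.single i 1 + t • (fun _ => 1))) 0 := by fun_prop
      have h := this.tendsto.mono_left (nhdsWithin_le_nhds (s := Set.Ioi (0 : ℝ)))
      simpa using h
    obtain ⟨t, h1, h2⟩ := ((hlim.eventually (lt_mem_nhds hpos)).and self_mem_nhdsWithin).exists
    have h2' : (0 : ℝ) < t := h2
    refine absurd (hfneg _ (hΓ.2.2.2.2.1 fun j => ?_)) (not_le.mpr h1)
    have : (0 : ℝ) ≤ (Pi.single i 1 : Fin n → ℝ) j := by
      rw [Pi.single_apply]; split_ifs <;> norm_num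
    simp only [Pi.add_apply, Pi.smul_apply, smul_eq_mul, mul_one]
    linarith
  have hA : 0 < ∑ i, a i := by
    have h := hf _ hone
    rcases (Finset.sum_nonneg fun i (_ : i ∈ Finset.univ) => ha i).lt_or_eq with h0 | h0
    · exact h0
    · have hz : ∀ i, a i = 0 := fun i =>
        (Finset.sum_eq_zero_iff_of_nonneg fun i _ => ha i).mp h0.symm i (Finset.mem_univ i)
      simp [hfa, hz] at h
  have hka : ∀ j, (k : ℝ) * a j ≤ ∑ i, a i := by
    intro j
    let l : Fin n := ⟨n - 1, by omega⟩
    have hcl : rhoVec n k ∘ (Equiv.swap j l) ∈ closure Γ :=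
      map_mem_closure (f := fun y : Fin n → ℝ => y ∘ (Equiv.swap j l)) (by fun_prop) hρ
        (fun y hy => hΓ.2.2.2.1 y hy _)
    have h := hfcl _ hcl
    have hl : ∀ i, Equiv.swap j l i = l ↔ i = j := fun i => by
      rw [Equiv.swap_apply_eq_iff, Equiv.swap_apply_right]
    rw [hfa, rhoVec_eq hn] at h
    simp only [Function.comp_apply, mul_sub, mul_one, Finset.sum_sub_distrib] at h
    change -(∑ i, a i - ∑ i, a i * (if Equiv.swap j l i = l then (k : ℝ) else 0)) ≤ 0 at h
    simp only [hl, mul_ite, mul_zero, Finset.sum_ite_eq', Finset.mem_univ, if_true] at h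
    linarith
  have := weighted_sum_pos hk1 hkn hx ha hA hka
  rw [hfa] at hfx
  linarith

/-! ### Zero-one vectors in `𝒫ₖ` and the theorem -/

theorem zeroOneVec_mem_Pcone_iff {n k j : ℕ} (hk : k ≤ n) :
    zeroOneVec n j ∈ Pcone n k ↔ j < k := by
  classical
  have hnn : ∀ i, 0 ≤ zeroOneVec n j i := fun i => by
    unfold zeroOneVec; split_ifs <;> norm_num
  constructor
  · intro h
    by_contra! hjk
    have := h (Finset.univ.filter fun i : Fin n => (i : ℕ) < k) (by
      rw [Fin.card_filter_val_lt]; omega)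
    refine this.ne' (Finset.sum_eq_zero fun i hi => ?_)
    have hi' := (Finset.mem_filter.mp hi).2
    simp [zeroOneVec, lt_of_lt_of_le hi' hjk]
  · intro h s hs
    refine Finset.sum_pos' (fun i _ => hnn i) ?_
    by_contra! hall
    have hsub : s ⊆ Finset.univ.filter fun i : Fin n => (i : ℕ) < j := by
      intro i hi
      have := hall i hi
      simp only [Finset.mem_filter, Finset.mem_univ, true_and]
      by_contra hij
      simp only [zeroOneVec, hij, if_false] at this
      linarith
    have := Finset.card_le_card hsub
    rw [Fin.card_filter_val_lt, hs] at this
    omega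

/-- `ϱ_Γ ≤ κ_Γ + 1`, with equality if and only if `Γ = 𝒫ₖ` for some
`1 ≤ k ≤ n` (in which case `k = κ_Γ + 1`). -/
theorem rho_le_kappa_add_one
    (n : ℕ) (hn : 1 ≤ n) (Γ : Set (Fin n → ℝ)) (hΓ : IsAdmissibleCone Γ)
    (κ : ℕ) (hκ : IsGreatest {k : ℕ | k ≤ n - 1 ∧ zeroOneVec n k ∈ Γ} κ)
    (ϱΓ : ℝ) (hϱΓ : rhoVec n ϱΓ ∈ frontier Γ) :
    ϱΓ ≤ (κ : ℝ) + 1 ∧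
    (ϱΓ = (κ : ℝ) + 1 ↔ ∃ k : ℕ, 1 ≤ k ∧ k ≤ n ∧ Γ = Pcone n k) ∧
    (∀ k : ℕ, 1 ≤ k → k ≤ n → Γ = Pcone n k → k = κ + 1) := by
  have hfr := hϱΓ
  rw [hΓ.1.frontier_eq] at hfr
  obtain ⟨⟨hκn, hκmem⟩, hκmax⟩ := hκ
  have hκ1 : κ + 1 ≤ n := by omega
  have hw : zeroOneVec n (κ + 1) ∉ Γ := by
    intro h
    by_cases hlt : κ + 1 ≤ n - 1
    · have := hκmax ⟨hlt, h⟩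
      omega
    · apply zero_notMem hΓ
      convert h using 1
      ext i
      have : (i : ℕ) < κ + 1 := by have := i.isLt; omega
      simp [zeroOneVec, this]
  have hsub := subset_Pcone hΓ hκ1 hw
  let l : Fin n := ⟨n - 1, by omega⟩
  have hle : ϱΓ ≤ (κ : ℝ) + 1 := by
    -- a `(κ + 1)`-set containing the last coordinate
    obtain ⟨s, hls, -, hs⟩ := Finset.exists_subsuperset_card_eq (n := κ + 1)
      (Finset.subset_univ ({l} : Finset (Fin n))) (by simp) (by simpa using hκ1)
    have hcl : closure Γ ⊆ {y | 0 ≤ ∑ i ∈ s, y i} :=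
      closure_minimal (fun y hy => (hsub hy s hs).le)
        (isClosed_le continuous_const (by fun_prop))
    have h : 0 ≤ ∑ i ∈ s, rhoVec n ϱΓ i := hcl hfr.1
    rw [sum_rhoVec hn, if_pos (Finset.singleton_subset_iff.mp hls), hs] at h
    push_cast at h
    linarith
  have hk_eq : ∀ k : ℕ, 1 ≤ k → k ≤ n → Γ = Pcone n k → k = κ + 1 := by
    intro k hk1 hkn hk
    rw [hk, zeroOneVec_mem_Pcone_iff hkn] at hκmem
    have : k - 1 ≤ κ := hκmax ⟨by omega, by
      rw [hk, zeroOneVec_mem_Pcone_iff hkn]; omega⟩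
    omega
  refine ⟨hle, ⟨fun h => ?_, ?_⟩, hk_eq⟩
  · refine ⟨κ + 1, by omega, hκ1, hsub.antisymm (Pcone_subset hn hΓ (by omega) hκ1 ?_)⟩
    have := hfr.1
    rw [h] at this
    exact_mod_cast this
  · rintro ⟨k, hk1, hkn, hk⟩
    obtain rfl := hk_eq k hk1 hkn hk
    -- a nonpositive `(κ + 1)`-sum of `rhoVec n ϱΓ` must involve the last coordinate
    have hnot := hfr.2
    simp only [hk, Pcone, Set.mem_ofPred_eq, not_forall, not_lt] at hnot
    obtain ⟨s, hs, hle0⟩ := hnot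
    rw [sum_rhoVec hn, hs] at hle0
    push_cast at hle0
    split_ifs at hle0
    · linarith
    · have : (0 : ℝ) ≤ κ := Nat.cast_nonneg κ
      linarith
end
end

section
/- For every real number t with 1 < t < n, there exists a type 2 open symmetric convex cone Γ̃ ⊂ ℝⁿ (containing the positive orthant, with nonempty boundary) such that ϱ_{Γ̃} = t. Concretely, let ϱ < 0 be the unique negative real with (n−ϱ)/(1−ϱ) = t; then Γ̃ := {λ ∈ ℝⁿ : Σⱼ₌₁ⁿ λⱼ − ϱλᵢ > 0 for all 1 ≤ i ≤ n} is such a cone: it is an open symmetric convex cone containing the positive orthant, (0,…,0,1) ∈ Γ̃, and (1,…,1,1−t) ∈ ∂Γ̃. -/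
/-! The equation `(n - ϱ) / (1 - ϱ) = t` is linear in `ϱ` once denominators are cleared, with
solution `ϱ = (t - n) / (t - 1)`. The cone is a finite intersection of open half-spaces
`ℓᵢ > 0`, `ℓᵢ(λ) = ∑ⱼ λⱼ - ϱ λᵢ`, which gives openness, convexity and homogeneity. For the
boundary point `v = (1,…,1,1-t)` one has `∑ⱼ vⱼ = n - t`; so the last functional
`ℓ` vanishes at `v` (hence `v` is outside the cone), and the others equal `n - t - ϱ > 0`. Since `ℓᵢ`
takes the value `n - ϱ > 0` on `(1,…,1)`, the points `v + s (1,…,1)` with `s ↓ 0` lie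
in the cone and converge to `v`. -/

open Finset

noncomputable section

lemma sum_eLast {n : ℕ} (hn : 0 < n) : ∑ j, eLast n j = 1 := by
  rw [Finset.sum_eq_single (⟨n - 1, by omega⟩ : Fin n)]
  · simp [eLast]
  · intro b _ hb
    have : (b : ℕ) ≠ n - 1 := fun h => hb (Fin.ext h)
    simp [eLast, this]
  · simp

lemma rhoVec_eq_s19 (n : ℕ) (t : ℝ) (i : Fin n) : rhoVec n t i = 1 - t * eLast n i := by
  unfold rhoVec eLast
  split_ifs <;> ring

lemma sum_rhoVec_s19 {n : ℕ} (hn : 0 < n) (t : ℝ) : ∑ j, rhoVec n t j = n - t := by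
  simp only [rhoVec_eq_s19, Finset.sum_sub_distrib, ← Finset.mul_sum, sum_eLast hn]
  simp


/-- For every real `t` with `1 < t < n` there is a type 2 admissible cone
`Γ̃ ⊂ ℝⁿ` with `ϱ_{Γ̃} = t`.  Concretely, there is a unique `ϱ < 0` with
`(n - ϱ)/(1 - ϱ) = t`, and for such `ϱ` the cone
`Γ̃ = {λ : ∑ⱼ λⱼ - ϱ λᵢ > 0 for all i}` is an open symmetric convex cone containing the
positive orthant with nonempty boundary, `(0,…,0,1) ∈ Γ̃`, and `(1,…,1,1-t) ∈ ∂Γ̃`. -/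
theorem exists_type_two_cone_with_rho
    (n : ℕ) (t : ℝ) (ht1 : 1 < t) (htn : t < (n : ℝ)) :
    (∃! ϱ : ℝ, ϱ < 0 ∧ ((n : ℝ) - ϱ) / (1 - ϱ) = t) ∧
    ∀ ϱ : ℝ, ϱ < 0 → ((n : ℝ) - ϱ) / (1 - ϱ) = t →
      ∀ Γt : Set (Fin n → ℝ),
        Γt = {lam : Fin n → ℝ | ∀ i : Fin n, 0 < (∑ j, lam j) - ϱ * lam i} →
        IsOpen Γt ∧
        (∀ x ∈ Γt, ∀ σ : Equiv.Perm (Fin n), x ∘ σ ∈ Γt) ∧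
        Convex ℝ Γt ∧
        (∀ x ∈ Γt, ∀ s : ℝ, 0 < s → s • x ∈ Γt) ∧
        {x : Fin n → ℝ | ∀ i, 0 < x i} ⊆ Γt ∧
        (frontier Γt).Nonempty ∧
        eLast n ∈ Γt ∧
        rhoVec n t ∈ frontier Γt := by
  have hn0 : 0 < n := by
    have : (0 : ℝ) < n := by linarith
    exact_mod_cast this
  have ht : 0 < t - 1 := by linarith
  refine ⟨⟨(t - n) / (t - 1), ⟨div_neg_of_neg_of_pos (by linarith) ht, ?_⟩, ?_⟩, ?_⟩
  · have h1 : (t - n) / (t - 1) < 0 := div_neg_of_neg_of_pos (by linarith) ht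
    rw [div_eq_iff (by linarith)]
    field_simp
    ring
  · rintro y ⟨hy, hy'⟩
    rw [div_eq_iff (by linarith)] at hy'
    rw [eq_div_iff ht.ne']
    linarith
  intro ϱ hϱ heq Γt hΓ
  rw [div_eq_iff (by linarith)] at heq
  have hopen : IsOpen Γt := by
    rw [hΓ, Set.ofPred_forall]
    exact isOpen_iInter_of_finite fun i => isOpen_lt (by fun_prop) (by fun_prop)
  have hfr : rhoVec n t ∈ frontier Γt := by
    rw [hopen.frontier_eq]
    constructor
    · have hlim : Filter.Tendsto (fun s : ℝ => fun i => rhoVec n t i + s)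
          (nhdsWithin 0 (Set.Ioi 0)) (nhds (rhoVec n t)) := by
        have hc : Continuous (fun s : ℝ => fun i => rhoVec n t i + s) := by fun_prop
        have := hc.tendsto 0
        simp only [add_zero] at this
        exact this.mono_left nhdsWithin_le_nhds
      refine mem_closure_of_tendsto hlim ?_
      filter_upwards [self_mem_nhdsWithin] with s hs
      have hs : 0 < s := hs
      rw [hΓ]
      intro i
      have hpos : 0 < s * (n - ϱ) := mul_pos hs (by linarith)
      simp only [Finset.sum_add_distrib, sum_rhoVec_s19 hn0, Finset.sum_const, Finset.card_univ,
        Fintype.card_fin, nsmul_eq_mul]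
      unfold rhoVec
      split_ifs <;> nlinarith
    · rw [hΓ]
      intro h
      have h := h ⟨n - 1, by omega⟩
      rw [sum_rhoVec_s19 hn0] at h
      simp only [rhoVec, if_true] at h
      linarith
  refine ⟨hopen, ?_, ?_, ?_, ?_, ⟨_, hfr⟩, ?_, hfr⟩
  · subst hΓ
    intro x hx σ i
    have h := hx (σ i)
    rw [← Equiv.sum_comp σ x] at h
    exact h
  · subst hΓ
    rw [Set.ofPred_forall]
    refine convex_iInter fun i => convex_halfSpace_gt (IsLinearMap.mk ?_ ?_) 0
    · intro x y
      simp only [Pi.add_apply, Finset.sum_add_distrib]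
      ring
    · intro c x
      simp only [Pi.smul_apply, smul_eq_mul, ← Finset.mul_sum]
      ring
  · subst hΓ
    intro x hx s hs i
    have h := mul_pos hs (hx i)
    simp only [Pi.smul_apply, smul_eq_mul, ← Finset.mul_sum]
    linarith
  · subst hΓ
    intro x hx i
    have h1 : 0 ≤ ∑ j, x j := Finset.sum_nonneg fun j _ => (hx j).le
    have h2 := mul_neg_of_neg_of_pos hϱ (hx i)
    linarith
  · subst hΓ
    intro i
    rw [sum_eLast hn0]
    unfold eLast
    split_ifs <;> linarith
end
end
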